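/- arXiv:2006.16359 — 5 statements merged into one kernel-verified Lean document; each statement's English description precedes it below -/
import Mathlib

section
/- Let π ∈ S_n avoid 132 and σ ≤ π in the right weak order. The step (σ_i, π⁻¹σ_i) → (σ_{i+1}, π⁻¹σ_{i+1}) points up and to the right (i.e., σ_i < σ_{i+1} and π⁻¹σ_i < π⁻¹σ_{i+1}) if and only if σs_i is not ≤ π in the right weak order. -/
open Equiv

/-- The adjacent transposition `s i`, swapping positions `i` and `i+1` (0-indexed). -/
def simpleT {n : ℕ} (i : Fin n) : Equiv.Perm (Fin (n+1)) := Equiv.swap i.castSucc i.succ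

/-- The inversion set of `σ`: pairs of values `(σ i, σ j)` with `i < j` and `σ i > σ j`. -/
def invSet {m : ℕ} (σ : Equiv.Perm (Fin m)) : Set (Fin m × Fin m) :=
  {p | ∃ i j : Fin m, i < j ∧ σ j < σ i ∧ p = (σ i, σ j)}

/-- The right weak Bruhat order, characterized by containment of inversion sets. -/
def wle {m : ℕ} (σ π : Equiv.Perm (Fin m)) : Prop := invSet σ ⊆ invSet π

/-- `σ` contains the pattern 132. -/
def contains132 {m : ℕ} (σ : Equiv.Perm (Fin m)) : Prop :=
  ∃ i₁ i₂ i₃ : Fin m, i₁ < i₂ ∧ i₂ < i₃ ∧ σ i₁ < σ i₃ ∧ σ i₃ < σ i₂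

theorem mem_invSet_aux {m : ℕ} (σ : Equiv.Perm (Fin m)) (a b : Fin m) :
    (a, b) ∈ invSet σ ↔ b < a ∧ σ.symm a < σ.symm b := by
  constructor
  · rintro ⟨i, j, hij, h, he⟩
    obtain ⟨rfl, rfl⟩ := Prod.mk.inj he
    simpa using ⟨h, hij⟩
  · rintro ⟨h1, h2⟩
    exact ⟨σ.symm a, σ.symm b, h2, by simpa using h1, by simp⟩

theorem simpleT_lt_aux {n : ℕ} (i : Fin n) (p q : Fin (n+1)) (h : p < q)
    (hne : ¬ (p = i.castSucc ∧ q = i.succ)) : simpleT i p < simpleT i q := by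
  unfold simpleT
  rw [Equiv.swap_apply_def, Equiv.swap_apply_def]
  simp only [Fin.ext_iff, Fin.lt_def, Fin.val_castSucc, Fin.val_succ] at *
  split_ifs <;> (try simp only [Fin.val_castSucc, Fin.val_succ]) <;> omega

/-- A step of the permutation path points up and to the right iff the corresponding
swap is forbidden, i.e. `σ sᵢ ≰ π`. -/
theorem step_up_right_iff_forbidden {n : ℕ} (π σ : Equiv.Perm (Fin (n+1)))
    (hπ : ¬ contains132 π) (hσπ : wle σ π) (i : Fin n) :
    (σ i.castSucc < σ i.succ ∧ π.symm (σ i.castSucc) < π.symm (σ i.succ)) ↔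
      ¬ wle (σ * simpleT i) π := by
  constructor
  · rintro ⟨h1, h2⟩ hw
    have hm : (σ i.succ, σ i.castSucc) ∈ invSet (σ * simpleT i) :=
      ⟨i.castSucc, i.succ, Fin.castSucc_lt_succ, by simpa [simpleT] using h1,
        by simp [simpleT]⟩
    have := (mem_invSet_aux π _ _).1 (hw hm)
    exact absurd this.2 (not_lt.2 h2.le)
  · intro hw
    by_contra hc
    apply hw
    rintro _ ⟨p, q, hpq, hlt, rfl⟩
    by_cases hne : p = i.castSucc ∧ q = i.succ
    · obtain ⟨rfl, rfl⟩ := hne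
      simp only [simpleT, Equiv.Perm.mul_apply, Equiv.swap_apply_left,
        Equiv.swap_apply_right] at hlt ⊢
      rw [mem_invSet_aux]
      refine ⟨hlt, lt_of_le_of_ne (not_lt.1 fun h => hc ⟨hlt, h⟩) fun h => ?_⟩
      exact hlt.ne' (π.symm.injective h)
    · exact hσπ ⟨simpleT i p, simpleT i q, simpleT_lt_aux i p q hpq hne, hlt, rfl⟩
end

section
/- Let π ∈ S_n avoid 132 and σ ≤ π in the right weak order. Fix k ≤ n. Then for any index i, the conditions σ_i < σ_k and π⁻¹σ_i < π⁻¹σ_k together imply i < k. Consequently, the number of points (σ_i, π⁻¹σ_i) with i < k, σ_i < σ_k, π⁻¹σ_i < π⁻¹σ_k equals the number of values a < σ_k such that the pair (σ_k, a) is not an inversion of π. -/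
open Equiv

/-- Quadrant III membership forces `i < k`, and the number of points of the permutation
path in Quadrant III equals the number of values `a < σ_k` with `(σ_k, a)` not an
inversion of `π`. -/
theorem quadrant_III_count {n : ℕ} (π σ : Equiv.Perm (Fin n))
    (hπ : ¬ contains132 π) (hσπ : wle σ π) (k : Fin n) :
    (∀ i : Fin n, σ i < σ k → π.symm (σ i) < π.symm (σ k) → i < k) ∧
      {i : Fin n | i < k ∧ σ i < σ k ∧ π.symm (σ i) < π.symm (σ k)}.ncard =
        {a : Fin n | a < σ k ∧ (σ k, a) ∉ invSet π}.ncard := by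
  have key : ∀ (τ : Equiv.Perm (Fin n)) (b a : Fin n),
      (b, a) ∈ invSet τ ↔ a < b ∧ τ.symm b < τ.symm a := by
    intro τ b a
    constructor
    · rintro ⟨i, j, hij, hlt, h⟩
      obtain ⟨rfl, rfl⟩ := Prod.mk.inj h
      simpa using ⟨hlt, hij⟩
    · rintro ⟨h1, h2⟩
      exact ⟨τ.symm b, τ.symm a, h2, by simpa using h1, by simp⟩
  have first : ∀ i : Fin n, σ i < σ k → π.symm (σ i) < π.symm (σ k) → i < k := by
    intro i h1 h2
    by_contra h
    have hne : i ≠ k := by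
      rintro rfl
      exact lt_irrefl _ h1
    have hki : k < i := lt_of_le_of_ne (not_lt.mp h) hne.symm
    have hm := hσπ ((key σ (σ k) (σ i)).2 ⟨h1, by simpa using hki⟩)
    exact lt_asymm h2 ((key π _ _).1 hm).2
  refine ⟨first, ?_⟩
  rw [← Set.ncard_image_of_injective _ σ.injective]
  congr 1
  ext a
  simp only [Set.mem_image, Set.mem_setOf_eq, key]
  constructor
  · rintro ⟨i, ⟨_, h2, h3⟩, rfl⟩
    exact ⟨h2, fun h => lt_asymm h3 h.2⟩
  · rintro ⟨h1, h2⟩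
    have h3 : π.symm a < π.symm (σ k) := by
      refine lt_of_le_of_ne (not_lt.mp fun h => h2 ⟨h1, h⟩) ?_
      intro h
      exact h1.ne (π.symm.injective h)
    refine ⟨σ.symm a, ⟨first _ (by simpa using h1) (by simpa using h3), by simpa using h1,
      by simpa using h3⟩, by simp⟩
end

section
/- Let V be a finite-dimensional complex representation of sl_2(ℂ) and let V' ⊆ V be a subspace closed under the actions of the standard generators f and h, such that dim(V' ∩ V[k]) = dim(V' ∩ V[-k]) for all integers k, where V[k] is the k-eigenspace of h. Then V' is closed under the action of e, i.e., V' is an sl_2-subrepresentation of V. -/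
open Module

namespace SLtwo

structure Tri {V : Type*} [AddCommGroup V] [Module ℂ V] (E F H : Module.End ℂ V) : Prop where
  ef : ∀ v, E (F v) = F (E v) + H v
  he : ∀ v, H (E v) = E (H v) + (2 : ℂ) • E v
  hf : ∀ v, H (F v) = F (H v) - (2 : ℂ) • F v

variable {V : Type*} [AddCommGroup V] [Module ℂ V] {E F H : Module.End ℂ V}

theorem Tri.symm (t : Tri E F H) : Tri F E (-H) where
  ef v := by simp [t.ef]
  he v := by simp [t.hf]; abel
  hf v := by simp [t.he]; abel

theorem Tri.wtF (t : Tri E F H) {x y : V} {c : ℂ} (hx : H x = c • x + y) (n : ℕ) :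
    H ((F ^ n) x) = (c - 2 * n) • (F ^ n) x + (F ^ n) y := by
  induction n with
  | zero => simpa using hx
  | succ n ih =>
    rw [pow_succ', Module.End.mul_apply, Module.End.mul_apply, t.hf, ih]
    simp only [map_add, map_smul]
    push_cast
    module

theorem Tri.wtE (t : Tri E F H) {x y : V} {c : ℂ} (hx : H x = c • x + y) (n : ℕ) :
    H ((E ^ n) x) = (c + 2 * n) • (E ^ n) x + (E ^ n) y := by
  induction n with
  | zero => simpa using hx
  | succ n ih =>
    rw [pow_succ', Module.End.mul_apply, Module.End.mul_apply, t.he, ih]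
    simp only [map_add, map_smul]
    push_cast
    module

theorem Tri.comm' (t : Tri E F H) {x y : V} {c : ℂ} (hx : H x = c • x + y) (n : ℕ) :
    E ((F ^ (n + 1)) x) = (F ^ (n + 1)) (E x) + (((n : ℂ) + 1) * (c - n)) • (F ^ n) x
      + ((n : ℂ) + 1) • (F ^ n) y := by
  induction n with
  | zero => simp [t.ef, hx, add_assoc]
  | succ n ih =>
    rw [pow_succ' F (n + 1), Module.End.mul_apply, Module.End.mul_apply, t.ef, ih, t.wtF hx]
    simp only [map_add, map_smul, ← Module.End.mul_apply, ← pow_succ']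
    push_cast
    module

theorem Tri.comm (t : Tri E F H) {x : V} {c : ℂ} (hx : H x = c • x) (n : ℕ) :
    E ((F ^ (n + 1)) x) = (F ^ (n + 1)) (E x) + (((n : ℂ) + 1) * (c - n)) • (F ^ n) x := by
  have := t.comm' (x := x) (y := 0) (c := c) (by simpa using hx) n
  simpa using this

theorem Tri.wtF0 (t : Tri E F H) {x : V} {c : ℂ} (hx : H x = c • x) (n : ℕ) :
    H ((F ^ n) x) = (c - 2 * n) • (F ^ n) x := by
  simpa using t.wtF (x := x) (y := 0) (c := c) (by simpa using hx) n

theorem Tri.wtE0 (t : Tri E F H) {x : V} {c : ℂ} (hx : H x = c • x) (n : ℕ) :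
    H ((E ^ n) x) = (c + 2 * n) • (E ^ n) x := by
  simpa using t.wtE (x := x) (y := 0) (c := c) (by simpa using hx) n

theorem Tri.wtE1 (t : Tri E F H) {x : V} {c : ℂ} (hx : H x = c • x) :
    H (E x) = (c + 2) • E x := by
  simpa using t.wtE0 hx 1

variable [FiniteDimensional ℂ V]

theorem Tri.nilE (t : Tri E F H) {x : V} {c : ℂ} (hx : H x = c • x) :
    ∃ n, (E ^ n) x = 0 := by
  by_contra! hne
  have hev : ∀ n : ℕ, H.HasEigenvalue (c + 2 * n) := fun n =>
    Module.End.hasEigenvalue_of_hasEigenvector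
      ⟨Module.End.mem_eigenspace_iff.2 (t.wtE0 hx n), hne n⟩
  have hfin : {μ : ℂ | H.HasEigenvalue μ}.Finite := Module.End.finite_hasEigenvalue H
  refine Set.infinite_of_injective_forall_mem (f := fun n : ℕ => c + 2 * (n : ℂ)) ?_ hev hfin
  intro a b hab
  simpa using hab

theorem Tri.nilF (t : Tri E F H) {x : V} {c : ℂ} (hx : H x = c • x) :
    ∃ n, (F ^ n) x = 0 :=
  t.symm.nilE (c := -c) (by simp [hx])

theorem exists_last (T : Module.End ℂ V) {x : V} (hx : x ≠ 0) (h : ∃ n, (T ^ n) x = 0) :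
    ∃ n, (T ^ n) x ≠ 0 ∧ (T ^ (n + 1)) x = 0 := by
  by_contra! hc
  obtain ⟨n, hn⟩ := h
  have : ∀ n, (T ^ n) x ≠ 0 := by
    intro n
    induction n with
    | zero => simpa using hx
    | succ n ih => exact hc n ih
  exact this n hn

theorem Tri.hw_nat (t : Tri E F H) {x : V} {c : ℂ} (hx : H x = c • x) (h0 : x ≠ 0)
    (hE : E x = 0) : ∃ n : ℕ, c = n := by
  obtain ⟨n, h1, h2⟩ := exists_last F h0 (t.nilF hx)
  refine ⟨n, ?_⟩
  have := t.comm hx n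
  rw [h2, hE] at this
  simp only [map_zero, zero_add] at this
  have := (smul_eq_zero.1 this.symm).resolve_right h1
  have h3 : (n : ℂ) + 1 ≠ 0 := by exact_mod_cast Nat.succ_ne_zero n
  exact sub_eq_zero.1 ((mul_eq_zero.1 this).resolve_left h3)

theorem Tri.hw_inj (t : Tri E F H) {x : V} {k : ℕ} (hx : H x = (k : ℂ) • x)
    (hE : E x = 0) (n : ℕ) (hn : n ≤ k) (h : (F ^ n) x = 0) : x = 0 := by
  induction n with
  | zero => simpa using h
  | succ n ih =>
    apply ih (by omega)
    have := t.comm hx n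
    rw [h, hE] at this
    simp only [map_zero, zero_add] at this
    refine (smul_eq_zero.1 this.symm).resolve_left ?_
    have h3 : (n : ℂ) + 1 ≠ 0 := by exact_mod_cast Nat.succ_ne_zero n
    refine mul_ne_zero h3 (sub_ne_zero.2 ?_)
    exact_mod_cast (by omega : k ≠ n)

theorem pow_zero_mono (T : Module.End ℂ V) {x : V} {n : ℕ} (h : (T ^ n) x = 0) :
    (T ^ (n + 1)) x = 0 := by
  rw [pow_succ', Module.End.mul_apply, h, map_zero]

theorem Tri.inj (t : Tri E F H) {x : V} {k : ℕ} (hx : H x = (k : ℂ) • x)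
    (h : (F ^ k) x = 0) : x = 0 := by
  obtain ⟨r, hr⟩ := t.nilE hx
  induction r generalizing x k with
  | zero => simpa using hr
  | succ r ih =>
    have h1 := pow_zero_mono F h
    have h2 := pow_zero_mono F h1
    have hEx : E x = 0 := by
      refine ih (k := k + 2) (by rw [t.wtE1 hx]; push_cast; rfl) ?_ ?_
      · have := t.comm hx (k + 1)
        rw [h2, h1] at this
        simpa using this.symm
      · rw [← Module.End.mul_apply, ← pow_succ]; exact hr
    exact t.hw_inj hx hEx k le_rfl h

theorem Tri.hw (t : Tri E F H) {x : V} {k : ℕ} (hx : H x = (k : ℂ) • x)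
    (h : (F ^ (k + 1)) x = 0) : E x = 0 := by
  refine t.inj (k := k + 2) (by rw [t.wtE1 hx]; push_cast; rfl) ?_
  have := t.comm hx (k + 1)
  rw [pow_zero_mono F h, h] at this
  simpa using this.symm

/-- Surjectivity on a symmetric submodule. -/
theorem Tri.surj (t : Tri E F H) (W : Submodule ℂ V) (hF : ∀ v ∈ W, F v ∈ W) (k : ℕ)
    (hd : finrank ℂ ↥(W ⊓ Module.End.eigenspace H (k : ℂ)) =
      finrank ℂ ↥(W ⊓ Module.End.eigenspace H (-k : ℂ)))
    {z : V} (hz : z ∈ W) (hzw : H z = (-k : ℂ) • z) :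
    ∃ u ∈ W, H u = (k : ℂ) • u ∧ (F ^ k) u = z := by
  have hFn : ∀ n : ℕ, ∀ v ∈ W, (F ^ n) v ∈ W := by
    intro n
    induction n with
    | zero => simp
    | succ n ih =>
      intro v hv
      rw [pow_succ', Module.End.mul_apply]
      exact hF _ (ih v hv)
  have hmap : ∀ v ∈ W ⊓ Module.End.eigenspace H (k : ℂ),
      (F ^ k) v ∈ W ⊓ Module.End.eigenspace H (-k : ℂ) := by
    rintro v ⟨hv, hv2⟩
    refine ⟨hFn k v hv, Module.End.mem_eigenspace_iff.2 ?_⟩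
    rw [t.wtF0 (Module.End.mem_eigenspace_iff.1 hv2)]
    congr 1; ring
  let g := (F ^ k).restrict hmap
  have hg : Function.Injective g := by
    rw [← LinearMap.ker_eq_bot, LinearMap.ker_eq_bot']
    rintro ⟨v, hv⟩ h
    have h' : (F ^ k) v = 0 := congrArg Subtype.val h
    exact Subtype.ext (t.inj (Module.End.mem_eigenspace_iff.1 hv.2) h')
  have hs := (LinearMap.injective_iff_surjective_of_finrank_eq_finrank hd).1 hg
  obtain ⟨⟨u, hu⟩, hu'⟩ := hs ⟨z, hz, Module.End.mem_eigenspace_iff.2 hzw⟩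
  exact ⟨u, hu.1, Module.End.mem_eigenspace_iff.1 hu.2, congrArg Subtype.val hu'⟩

theorem Tri.le_dim (t : Tri E F H) (k : ℕ) :
    finrank ℂ ↥(⊤ ⊓ Module.End.eigenspace H (k : ℂ)) ≤
      finrank ℂ ↥(⊤ ⊓ Module.End.eigenspace H (-k : ℂ)) := by
  have hmap : ∀ v ∈ ⊤ ⊓ Module.End.eigenspace H (k : ℂ),
      (F ^ k) v ∈ ⊤ ⊓ Module.End.eigenspace H (-k : ℂ) := by
    rintro v ⟨hv, hv2⟩
    refine ⟨trivial, Module.End.mem_eigenspace_iff.2 ?_⟩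
    rw [t.wtF0 (Module.End.mem_eigenspace_iff.1 hv2)]
    congr 1; ring
  let g := (F ^ k).restrict hmap
  refine LinearMap.finrank_le_finrank_of_injective (f := g) ?_
  rw [← LinearMap.ker_eq_bot, LinearMap.ker_eq_bot']
  rintro ⟨v, hv⟩ h
  have h' : (F ^ k) v = 0 := congrArg Subtype.val h
  exact Subtype.ext (t.inj (Module.End.mem_eigenspace_iff.1 hv.2) h')

theorem eig_neg (H : Module.End ℂ V) (c : ℂ) :
    Module.End.eigenspace (-H) c = Module.End.eigenspace H (-c) := by
  ext v
  simp only [Module.End.mem_eigenspace_iff, LinearMap.neg_apply, neg_smul]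
  exact neg_eq_iff_eq_neg

theorem Tri.surj_top (t : Tri E F H) (k : ℕ) {z : V} (hzw : H z = (-k : ℂ) • z) :
    ∃ u, H u = (k : ℂ) • u ∧ (F ^ k) u = z := by
  have h2 := t.symm.le_dim k
  rw [eig_neg, eig_neg, neg_neg] at h2
  obtain ⟨u, -, h⟩ := t.surj ⊤ (by simp) k (le_antisymm (t.le_dim k) h2) trivial hzw
  exact ⟨u, h⟩

theorem Tri.semis0 (t : Tri E F H) {x y : V} {k : ℕ} (hx : H x = (k : ℂ) • x + y)
    (hy : H y = (k : ℂ) • y) (hE : E y = 0) : y = 0 := by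
  have hFy : (F ^ (k + 1)) y = 0 := by
    by_contra hne
    have hw := t.wtF0 hy (k + 1)
    obtain ⟨n, hn⟩ := t.hw_nat hw hne (by rw [t.comm hy k, hE]; simp)
    have : (k : ℤ) - 2 * (k + 1) = n := by
      have h : (((k : ℤ) - 2 * (k + 1) : ℤ) : ℂ) = ((n : ℤ) : ℂ) := by
        push_cast at hn ⊢; exact hn
      exact_mod_cast h
    omega
  obtain ⟨u, hu, huz⟩ := t.surj_top (k + 2) (z := (F ^ (k + 1)) x) (by
    rw [t.wtF hx, hFy, add_zero]; congr 1; push_cast; ring)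
  have hFu : H (F u) = (k : ℂ) • F u := by
    have := t.wtF0 hu 1
    simp only [pow_one] at this
    rw [this]; congr 1; push_cast; ring
  have hx' : H (x - F u) = (k : ℂ) • (x - F u) + y := by
    rw [map_sub, hx, hFu]; module
  have h0 : (F ^ (k + 1)) (x - F u) = 0 := by
    rw [map_sub, ← huz, pow_succ F (k + 1), Module.End.mul_apply, sub_self]
  have hEx : E (x - F u) = 0 := by
    refine t.inj (k := k + 2) ?_ ?_
    · have := t.wtE hx' 1
      simp only [pow_one] at this
      rw [this, hE]; push_cast; simp
    · have := t.comm' hx' (k + 1)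
      rw [pow_zero_mono F h0, h0, hFy] at this
      simpa using this.symm
  have h3 := t.comm' hx' k
  rw [h0, hEx] at h3
  simp only [map_zero, sub_self, mul_zero, zero_smul, zero_add] at h3
  have h4 : (k : ℂ) + 1 ≠ 0 := by exact_mod_cast Nat.succ_ne_zero k
  exact t.inj hy ((smul_eq_zero.1 h3.symm).resolve_left h4)

theorem Tri.semis (t : Tri E F H) {x y : V} {c : ℂ} (hx : H x = c • x + y)
    (hy : H y = c • y) : y = 0 := by
  by_contra h0
  obtain ⟨n, h1, h2⟩ := exists_last E h0 (t.nilE hy)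
  rw [pow_succ', Module.End.mul_apply] at h2
  obtain ⟨m, hm⟩ := t.hw_nat (t.wtE0 hy n) h1 h2
  have hx' := t.wtE hx n
  have hy' := t.wtE0 hy n
  rw [hm] at hx' hy'
  exact h1 (t.semis0 hx' hy' h2)

theorem Tri.int (t : Tri E F H) {x : V} {c : ℂ} (hx : H x = c • x) (h0 : x ≠ 0) :
    ∃ k : ℤ, c = k := by
  obtain ⟨n, h1, h2⟩ := exists_last E h0 (t.nilE hx)
  rw [pow_succ', Module.End.mul_apply] at h2
  obtain ⟨m, hm⟩ := t.hw_nat (t.wtE0 hx n) h1 h2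
  refine ⟨m - 2 * n, ?_⟩
  push_cast
  rw [← hm]; ring

theorem Tri.gen (t : Tri E F H) {c : ℂ} (n : ℕ) {x : V}
    (hx : ((H - c • (1 : Module.End ℂ V)) ^ n) x = 0) : H x = c • x := by
  induction n generalizing x with
  | zero =>
    have : x = 0 := by simpa using hx
    simp [this]
  | succ n ih =>
    rw [pow_succ, Module.End.mul_apply] at hx
    have h := ih hx
    have := t.semis (x := x) (y := (H - c • (1 : Module.End ℂ V)) x) (c := c) (by simp) h
    simpa [sub_eq_zero] using this

theorem Tri.bound (H : Module.End ℂ V) : ∃ B : ℕ, ∀ k : ℕ, B ≤ k → ∀ x : V,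
    H x = (k : ℂ) • x → x = 0 := by
  have hfin : {μ : ℂ | H.HasEigenvalue μ}.Finite := Module.End.finite_hasEigenvalue H
  have hfin2 : {k : ℕ | H.HasEigenvalue (k : ℂ)}.Finite :=
    hfin.preimage (f := fun k : ℕ => (k : ℂ)) (Nat.cast_injective.injOn)
  obtain ⟨B, hB⟩ := hfin2.bddAbove
  refine ⟨B + 1, fun k hk x hx => ?_⟩
  by_contra h0
  have := hB (show k ∈ {k : ℕ | H.HasEigenvalue (k : ℂ)} from
    Module.End.hasEigenvalue_of_hasEigenvector ⟨Module.End.mem_eigenspace_iff.2 hx, h0⟩)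
  omega

theorem Tri.main_nonneg (t : Tri E F H) (W : Submodule ℂ V) (hF : ∀ v ∈ W, F v ∈ W)
    (hd : ∀ k : ℕ, finrank ℂ ↥(W ⊓ Module.End.eigenspace H (k : ℂ)) =
      finrank ℂ ↥(W ⊓ Module.End.eigenspace H (-k : ℂ)))
    (hFn : ∀ n : ℕ, ∀ v ∈ W, (F ^ n) v ∈ W)
    (k : ℕ) {v : V} (hv : v ∈ W) (hk : H v = (k : ℂ) • v) : E v ∈ W := by
  obtain ⟨B, hB⟩ := Tri.bound H
  obtain ⟨d, hd'⟩ : ∃ d, B ≤ k + d := ⟨B, by omega⟩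
  induction d generalizing k v with
  | zero =>
    rw [hB k (by omega) v hk]; simp
  | succ d ih =>
    obtain ⟨u, huW, hu, huz⟩ := t.surj W hF (k + 2) (hd _) (hFn (k + 1) v hv) (by
      rw [t.wtF0 hk]; congr 1; push_cast; ring)
    have hFu : H (F u) = (k : ℂ) • F u := by
      have := t.wtF0 hu 1
      simp only [pow_one] at this
      rw [this]; congr 1; push_cast; ring
    have h0 : E (v - F u) = 0 := by
      refine t.hw (k := k) ?_ ?_
      · rw [map_sub, hk, hFu]; module
      · rw [map_sub, ← huz, pow_succ F (k + 1), Module.End.mul_apply, sub_self]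
    rw [map_sub, sub_eq_zero, t.ef, hu] at h0
    rw [h0]
    exact W.add_mem (hF _ (ih (k + 2) huW hu (by omega))) (W.smul_mem _ huW)

theorem Tri.main (t : Tri E F H) (W : Submodule ℂ V) (hF : ∀ v ∈ W, F v ∈ W)
    (hH : ∀ v ∈ W, H v ∈ W)
    (hd : ∀ k : ℕ, finrank ℂ ↥(W ⊓ Module.End.eigenspace H (k : ℂ)) =
      finrank ℂ ↥(W ⊓ Module.End.eigenspace H (-k : ℂ))) :
    ∀ v ∈ W, E v ∈ W := by
  have hFn : ∀ n : ℕ, ∀ v ∈ W, (F ^ n) v ∈ W := by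
    intro n
    induction n with
    | zero => simp
    | succ n ih =>
      intro v hv
      rw [pow_succ', Module.End.mul_apply]
      exact hF _ (ih v hv)
  have key : ∀ (c : ℂ) (v : V), v ∈ W → H v = c • v → E v ∈ W := by
    intro c v hv hc
    by_cases h0 : v = 0
    · simp [h0]
    obtain ⟨k, rfl⟩ := t.int hc h0
    obtain ⟨n, rfl | rfl⟩ := k.eq_nat_or_neg
    · exact t.main_nonneg W hF hd hFn n hv (by simpa using hc)
    · obtain ⟨u, huW, hu, rfl⟩ := t.surj W hF n (hd n) hv (by simpa using hc)
      have hEu := t.main_nonneg W hF hd hFn n huW hu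
      cases n with
      | zero => simpa using hEu
      | succ n =>
        rw [t.comm hu]
        exact W.add_mem (hFn _ _ hEu) (W.smul_mem _ (hFn _ _ huW))
  have htop : ⨆ μ, H.maxGenEigenspace μ = ⊤ := Module.End.iSup_maxGenEigenspace_eq_top H
  have hdec := Submodule.inf_iSup_genEigenspace (p := W) (f := H) hH ⊤
  have hle : W ≤ W.comap E := by
    have h1 : W = ⨆ μ, W ⊓ H.genEigenspace μ ⊤ := by
      rw [← hdec]
      exact (inf_eq_left.2 (by
        have : (⨆ μ, H.genEigenspace μ ⊤) = ⊤ := htop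
        rw [this]; exact le_top)).symm
    conv_lhs => rw [h1]
    refine iSup_le fun c v hv => ?_
    obtain ⟨hvW, hv2⟩ := hv
    obtain ⟨n, hn⟩ := (Module.End.mem_maxGenEigenspace H c v).1 hv2
    exact key c v hvW (t.gen n hn)
  exact hle

end SLtwo

/-- A `𝔟⁻`-stable, weight-symmetric subspace of a finite-dimensional `𝔰𝔩₂(ℂ)`-representation
is stable under `e` as well. -/
theorem weight_symmetric_b_submodule_is_submodule
    (V : Type*) [AddCommGroup V] [Module ℂ V] [FiniteDimensional ℂ V]
    (E F H : Module.End ℂ V)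
    (hEF : E * F - F * E = H)
    (hHE : H * E - E * H = (2 : ℂ) • E)
    (hHF : H * F - F * H = (-2 : ℂ) • F)
    (V' : Submodule ℂ V)
    (hF : ∀ v ∈ V', F v ∈ V')
    (hH : ∀ v ∈ V', H v ∈ V')
    (hsymm : ∀ k : ℤ,
      Module.finrank ℂ ↥(V' ⊓ Module.End.eigenspace H (k : ℂ)) =
        Module.finrank ℂ ↥(V' ⊓ Module.End.eigenspace H (-k : ℂ))) :
    ∀ v ∈ V', E v ∈ V' := by
  have t : SLtwo.Tri E F H := by
    refine ⟨fun v => ?_, fun v => ?_, fun v => ?_⟩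
    · have h : E (F v) - F (E v) = H v := LinearMap.congr_fun hEF v
      rw [← h]; abel
    · have h : H (E v) - E (H v) = (2 : ℂ) • E v := LinearMap.congr_fun hHE v
      rw [← h]; abel
    · have h : H (F v) - F (H v) = (-2 : ℂ) • F v := LinearMap.congr_fun hHF v
      rw [neg_smul] at h
      rw [sub_eq_add_neg, ← h]; abel
  refine t.main V' hF hH fun k => ?_
  have h := hsymm k
  rw [Int.cast_natCast] at h
  exact h
end

section
/- For any permutation σ ∈ S_n of length ℓ = ℓ(σ), the principal specialization of the Schubert polynomial satisfies Macdonald's identity: 𝔖_σ(1, 1, ..., 1) = (1/ℓ!) · Σ i_1 i_2 ⋯ i_ℓ, where the sum ranges over all reduced words (i_1, ..., i_ℓ) such that s_{i_1} ⋯ s_{i_ℓ} = σ. -/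
open Equiv MvPolynomial

/-- Coxeter length: minimal length of a word in adjacent transpositions. -/
noncomputable def len {n : ℕ} (σ : Equiv.Perm (Fin (n+1))) : ℕ :=
  sInf {k | ∃ l : List (Fin n), l.length = k ∧ (l.map simpleT).prod = σ}

/-- `S` is the family of Schubert polynomials. -/
def IsSchubertFamily {n : ℕ} (S : Equiv.Perm (Fin (n+1)) → MvPolynomial (Fin (n+1)) ℂ) : Prop :=
  S Fin.revPerm = ∏ i : Fin (n+1), X i ^ (n - (i : ℕ)) ∧
  ∀ (σ : Equiv.Perm (Fin (n+1))) (i : Fin n), len σ = len (simpleT i * σ) + 1 →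
    (X i.castSucc - X i.succ) * S (simpleT i * σ) =
      S σ - rename (Equiv.swap i.castSucc i.succ) (S σ)

section aux

variable {n : ℕ}

def invS (τ : Equiv.Perm (Fin (n+1))) : Finset (Fin (n+1) × Fin (n+1)) :=
  Finset.univ.filter (fun p => p.1 < p.2 ∧ τ p.2 < τ p.1)

lemma mem_invS (τ : Equiv.Perm (Fin (n+1))) (a b : Fin (n+1)) :
    (a, b) ∈ invS τ ↔ a < b ∧ τ b < τ a := by
  unfold invS
  exact (Finset.mem_filter).trans (by simp)

lemma simpleT_mul_self (i : Fin n) : simpleT i * simpleT i = 1 := by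
  simp [simpleT]

lemma simpleT_inv (i : Fin n) : (simpleT i)⁻¹ = simpleT i := by
  simp [simpleT]

lemma simpleT_mul_cancel (i : Fin n) (σ : Equiv.Perm (Fin (n+1))) :
    simpleT i * (simpleT i * σ) = σ := by
  rw [← mul_assoc, simpleT_mul_self, one_mul]

lemma mul_simpleT_cancel (i : Fin n) (σ : Equiv.Perm (Fin (n+1))) :
    σ * simpleT i * simpleT i = σ := by
  rw [mul_assoc, simpleT_mul_self, mul_one]

lemma simpleT_lt (i : Fin n) (a b : Fin (n+1)) (h1 : ¬ (a = i.castSucc ∧ b = i.succ))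
    (h2 : ¬ (a = i.succ ∧ b = i.castSucc)) :
    simpleT i a < simpleT i b ↔ a < b := by
  simp only [simpleT, Equiv.swap_apply_def]
  simp only [Fin.ext_iff, Fin.lt_def, Fin.val_castSucc, Fin.val_succ] at *
  split_ifs <;> simp only [Fin.val_castSucc, Fin.val_succ] at * <;> omega

lemma invS_mul (τ : Equiv.Perm (Fin (n+1))) (i : Fin n) (h : τ i.castSucc < τ i.succ) :
    (invS (τ * simpleT i)).card = (invS τ).card + 1 := by
  have hs1 : simpleT i i.castSucc = i.succ := by simp [simpleT]
  have hs2 : simpleT i i.succ = i.castSucc := by simp [simpleT]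
  have key : invS (τ * simpleT i) = insert (i.castSucc, i.succ)
      ((invS τ).map (Equiv.prodCongr (simpleT i) (simpleT i)).toEmbedding) := by
    ext ⟨a, b⟩
    rw [Finset.mem_insert, Finset.mem_map_equiv]
    have e : (Equiv.prodCongr (simpleT i) (simpleT i)).symm (a, b)
        = (simpleT i a, simpleT i b) := by
      simp [simpleT]
    rw [e]
    simp only [mem_invS, Equiv.Perm.mul_apply, Prod.mk.injEq]
    by_cases h1 : a = i.castSucc ∧ b = i.succ
    · obtain ⟨rfl, rfl⟩ := h1
      simp [hs1, hs2, h]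
    · by_cases h2 : a = i.succ ∧ b = i.castSucc
      · obtain ⟨rfl, rfl⟩ := h2
        simp only [hs1, hs2]
        have h3 : ¬ (i.succ < i.castSucc) := by simp [Fin.lt_def]
        have h4 : i.succ ≠ i.castSucc := by simp [Fin.ext_iff]
        have h5 := h.not_gt
        tauto
      · rw [simpleT_lt i a b h1 h2]
        simp [h1]
  rw [key, Finset.card_insert_of_notMem, Finset.card_map]
  rw [Finset.mem_map_equiv]
  have e : (Equiv.prodCongr (simpleT i) (simpleT i)).symm (i.castSucc, i.succ)
        = (i.succ, i.castSucc) := by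
      simp [simpleT]
  rw [e, mem_invS]
  intro hh
  have := hh.1
  rw [Fin.lt_def] at this
  simp only [Fin.val_castSucc, Fin.val_succ] at this
  omega

lemma invS_mul' (τ : Equiv.Perm (Fin (n+1))) (i : Fin n) (h : τ i.succ < τ i.castSucc) :
    (invS τ).card = (invS (τ * simpleT i)).card + 1 := by
  have := invS_mul (τ * simpleT i) i (by simpa [simpleT] using h)
  rwa [mul_simpleT_cancel] at this

lemma strictMono_eq_one (τ : Equiv.Perm (Fin (n+1))) (h : ∀ i : Fin n, τ i.castSucc < τ i.succ) :
    τ = 1 := by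
  have hm : StrictMono τ := Fin.strictMono_iff_lt_succ.2 h
  have := (StrictMono.range_inj hm strictMono_id).1 (by simp [τ.surjective.range_eq])
  ext x
  simp [this]

lemma strictAnti_eq_rev (τ : Equiv.Perm (Fin (n+1))) (h : ∀ i : Fin n, τ i.succ < τ i.castSucc) :
    τ = Fin.revPerm := by
  have := strictMono_eq_one (Fin.revPerm * τ) (fun i => by simpa using h i)
  ext x
  have h2 := congrArg (fun e => Fin.rev (e x)) this
  simp at h2
  simp [h2]

lemma ne_cs (τ : Equiv.Perm (Fin (n+1))) (i : Fin n) : τ i.castSucc ≠ τ i.succ := by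
  intro h
  have := τ.injective h
  simp [Fin.ext_iff] at this

lemma invS_le_word (l : List (Fin n)) :
    (invS ((l.map simpleT).prod)⁻¹).card ≤ l.length := by
  induction l with
  | nil =>
    simp only [List.map_nil, List.prod_nil, inv_one, List.length_nil, Nat.le_zero,
      Finset.card_eq_zero]
    ext ⟨a, b⟩
    rw [mem_invS]
    simp
    exact fun h => h.le
  | cons i l ih =>
    simp only [List.map_cons, List.prod_cons, mul_inv_rev, simpleT_inv, List.length_cons]
    rcases lt_or_gt_of_ne (ne_cs ((l.map simpleT).prod)⁻¹ i) with h | h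
    · rw [invS_mul _ _ h]; omega
    · have := invS_mul' _ _ h
      omega

lemma exists_word (m : ℕ) : ∀ τ : Equiv.Perm (Fin (n+1)), (invS τ).card = m →
    ∃ l : List (Fin n), l.length = m ∧ (l.map simpleT).prod = τ⁻¹ := by
  induction m with
  | zero =>
    intro τ h
    refine ⟨[], rfl, ?_⟩
    have : τ = 1 := by
      apply strictMono_eq_one
      intro i
      by_contra hc
      have := invS_mul' τ i (lt_of_le_of_ne (not_lt.1 hc) (ne_cs τ i).symm)
      omega
    simp [this]
  | succ m ih =>
    intro τ h
    have : ∃ i : Fin n, τ i.succ < τ i.castSucc := by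
      by_contra hc
      push Not at hc
      have h1 := strictMono_eq_one τ (fun i => lt_of_le_of_ne (hc i) (ne_cs τ i))
      have := invS_le_word ([] : List (Fin n))
      simp [h1] at this h
      rw [this] at h
      simp at h
    obtain ⟨i, hi⟩ := this
    obtain ⟨l, hl, hp⟩ := ih (τ * simpleT i) (by have := invS_mul' τ i hi; omega)
    refine ⟨i :: l, by simp [hl], ?_⟩
    simp only [List.map_cons, List.prod_cons, hp, mul_inv_rev, simpleT_inv]
    exact simpleT_mul_cancel _ _

lemma len_eq (σ : Equiv.Perm (Fin (n+1))) : len σ = (invS σ⁻¹).card := by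
  apply le_antisymm
  · apply Nat.sInf_le
    obtain ⟨l, h1, h2⟩ := exists_word _ σ⁻¹ rfl
    exact ⟨l, h1, by simpa using h2⟩
  · have hne : {k | ∃ l : List (Fin n), l.length = k ∧ (l.map simpleT).prod = σ}.Nonempty := by
      obtain ⟨l, h1, h2⟩ := exists_word _ σ⁻¹ rfl
      exact ⟨_, l, h1, by simpa using h2⟩
    obtain ⟨l, h1, h2⟩ := Nat.sInf_mem hne
    have := invS_le_word l
    rw [h2] at this
    rw [len, ← h1]
    exact this

lemma len_le_word (l : List (Fin n)) : len ((l.map simpleT).prod) ≤ l.length := by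
  rw [len_eq]; exact invS_le_word l

lemma exists_red (σ : Equiv.Perm (Fin (n+1))) :
    ∃ l : List (Fin n), l.length = len σ ∧ (l.map simpleT).prod = σ := by
  obtain ⟨l, h1, h2⟩ := exists_word _ σ⁻¹ rfl
  exact ⟨l, by rw [len_eq, h1], by simpa using h2⟩

lemma len_mul (i : Fin n) (σ : Equiv.Perm (Fin (n+1))) :
    len (simpleT i * σ) = len σ + 1 ∨ len σ = len (simpleT i * σ) + 1 := by
  simp only [len_eq, mul_inv_rev, simpleT_inv]
  rcases lt_or_gt_of_ne (ne_cs σ⁻¹ i) with h | h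
  · left; exact invS_mul _ _ h
  · right; exact invS_mul' _ _ h

lemma len_inv_le (σ : Equiv.Perm (Fin (n+1))) : len σ⁻¹ ≤ len σ := by
  obtain ⟨l, h1, h2⟩ := exists_red σ
  have : ((l.reverse).map simpleT).prod = σ⁻¹ := by
    rw [← h2, List.prod_inv_reverse, List.map_reverse, List.map_map]
    congr 2
  rw [← this, ← h1]
  simpa using len_le_word l.reverse

lemma len_inv (σ : Equiv.Perm (Fin (n+1))) : len σ⁻¹ = len σ :=
  le_antisymm (len_inv_le σ) (by simpa using len_inv_le σ⁻¹)

lemma len_mul_right (i : Fin n) (σ : Equiv.Perm (Fin (n+1))) :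
    len (σ * simpleT i) = len σ + 1 ∨ len σ = len (σ * simpleT i) + 1 := by
  have := len_mul i σ⁻¹
  rw [← len_inv (σ * simpleT i), ← len_inv σ, mul_inv_rev, simpleT_inv]
  exact this

lemma eq_rev_of_len (σ : Equiv.Perm (Fin (n+1)))
    (h : ∀ i : Fin n, len σ = len (simpleT i * σ) + 1) : σ = Fin.revPerm := by
  have : σ⁻¹ = Fin.revPerm := by
    apply strictAnti_eq_rev
    intro i
    by_contra hc
    have h1 := invS_mul σ⁻¹ i (lt_of_le_of_ne (not_lt.1 hc) (ne_cs _ i))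
    have h2 := h i
    simp only [len_eq, mul_inv_rev, simpleT_inv] at h2
    omega
  rw [← inv_inv σ, this]
  rfl

lemma eq_one_of_len (σ : Equiv.Perm (Fin (n+1))) (h : len σ = 0) : σ = 1 := by
  obtain ⟨l, h1, h2⟩ := exists_red σ
  rw [h, List.length_eq_zero_iff] at h1
  subst h1
  simpa using h2.symm

lemma len_rev : len (Fin.revPerm : Equiv.Perm (Fin (n+1))) = ∑ i : Fin (n+1), (n - (i : ℕ)) := by
  rw [len_eq]
  have : invS (Fin.revPerm : Equiv.Perm (Fin (n+1)))⁻¹ =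
      (Finset.univ.sigma (fun a : Fin (n+1) => Finset.Ioi a)).map
        (Equiv.sigmaEquivProd _ _).toEmbedding := by
    ext ⟨a, b⟩
    rw [Finset.mem_map_equiv]
    have : (Fin.revPerm : Equiv.Perm (Fin (n+1)))⁻¹ = Fin.revPerm := rfl
    rw [mem_invS, this]
    simp
  rw [this, Finset.card_map, Finset.card_sigma]
  apply Finset.sum_congr rfl
  intro a _
  rw [Fin.card_Ioi]
  omega

lemma len_bound (σ : Equiv.Perm (Fin (n+1))) : len σ ≤ Fintype.card (Fin (n+1) × Fin (n+1)) := by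
  rw [len_eq]; exact Finset.card_le_univ _

lemma down_induction (P : Equiv.Perm (Fin (n+1)) → Prop) (h0 : P Fin.revPerm)
    (hs : ∀ σ (i : Fin n), len σ = len (simpleT i * σ) + 1 → P σ → P (simpleT i * σ)) :
    ∀ σ, P σ := by
  have : ∀ m, ∀ σ : Equiv.Perm (Fin (n+1)),
      Fintype.card (Fin (n+1) × Fin (n+1)) - len σ = m → P σ := by
    intro m
    induction m using Nat.strong_induction_on with
    | _ m ih =>
      intro σ hσ
      by_cases hc : ∀ i : Fin n, len σ = len (simpleT i * σ) + 1
      · rw [eq_rev_of_len σ hc]; exact h0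
      · push Not at hc
        obtain ⟨i, hi⟩ := hc
        have h1 := (len_mul i σ).resolve_right hi
        have h2 := len_bound (simpleT i * σ)
        have h3 := ih _ (by omega) (simpleT i * σ) rfl
        have h4 := hs (simpleT i * σ) i (by rw [simpleT_mul_cancel]; exact h1) h3
        rwa [simpleT_mul_cancel] at h4
  exact fun σ => this _ σ rfl

end aux
section poly

variable {n : ℕ}

noncomputable def nab : Derivation ℂ (MvPolynomial (Fin (n+1)) ℂ) (MvPolynomial (Fin (n+1)) ℂ) :=
  mkDerivation ℂ (fun _ => 1)

noncomputable def eul : Derivation ℂ (MvPolynomial (Fin (n+1)) ℂ) (MvPolynomial (Fin (n+1)) ℂ) :=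
  mkDerivation ℂ (fun i => X i)

lemma rename_der (D : Derivation ℂ (MvPolynomial (Fin (n+1)) ℂ) (MvPolynomial (Fin (n+1)) ℂ))
    (s : Fin (n+1) → Fin (n+1)) (h : ∀ i, rename s (D (X i)) = D (X (s i)))
    (p : MvPolynomial (Fin (n+1)) ℂ) : rename s (D p) = D (rename s p) := by
  induction p using MvPolynomial.induction_on with
  | C a => simp
  | add p q hp hq => simp [hp, hq]
  | mul_X p i hp => simp [Derivation.leibniz, hp, h]

lemma rename_nab (s : Fin (n+1) → Fin (n+1)) (p : MvPolynomial (Fin (n+1)) ℂ) :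
    rename s (nab p) = nab (rename s p) :=
  rename_der _ _ (fun i => by simp [nab]) p

lemma rename_eul (s : Fin (n+1) → Fin (n+1)) (p : MvPolynomial (Fin (n+1)) ℂ) :
    rename s (eul p) = eul (rename s p) :=
  rename_der _ _ (fun i => by simp [eul]) p

lemma eval_nab_eq (p : MvPolynomial (Fin (n+1)) ℂ) :
    eval (fun _ => (1:ℂ)) (nab p) = eval (fun _ => (1:ℂ)) (eul p) := by
  induction p using MvPolynomial.induction_on with
  | C a => simp
  | add p q hp hq => simp [hp, hq]
  | mul_X p i hp =>
    have h1 : nab (X i : MvPolynomial (Fin (n+1)) ℂ) = 1 := by simp [nab]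
    have h2 : eul (X i : MvPolynomial (Fin (n+1)) ℂ) = X i := by simp [eul]
    simp [Derivation.leibniz, hp, h1, h2]

lemma X_sub_ne (i : Fin n) :
    (X i.castSucc - X i.succ : MvPolynomial (Fin (n+1)) ℂ) ≠ 0 := by
  intro h
  have := X_injective (R := ℂ) (sub_eq_zero.1 h)
  simp [Fin.ext_iff] at this

lemma rename_swap_swap (i : Fin n) (p : MvPolynomial (Fin (n+1)) ℂ) :
    rename (Equiv.swap i.castSucc i.succ) (rename (Equiv.swap i.castSucc i.succ) p) = p := by
  rw [rename_rename]
  have : (⇑(Equiv.swap i.castSucc i.succ) ∘ ⇑(Equiv.swap i.castSucc i.succ)) = id := by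
    ext x; simp
  rw [this, rename_id_apply]

variable {S : Equiv.Perm (Fin (n+1)) → MvPolynomial (Fin (n+1)) ℂ}

/-- if `s_i σ > σ` then `S σ` is symmetric in `i, i+1` -/
lemma symm_of_asc (hS : IsSchubertFamily S) (σ : Equiv.Perm (Fin (n+1))) (i : Fin n)
    (h : len (simpleT i * σ) = len σ + 1) :
    rename (Equiv.swap i.castSucc i.succ) (S σ) = S σ := by
  have h1 := hS.2 (simpleT i * σ) i (by rw [simpleT_mul_cancel]; exact h)
  rw [simpleT_mul_cancel] at h1
  have h2 := congrArg (rename (Equiv.swap i.castSucc i.succ)) h1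
  rw [map_sub, rename_swap_swap, map_mul, map_sub, rename_X, rename_X, Equiv.swap_apply_left,
    Equiv.swap_apply_right] at h2
  apply mul_left_cancel₀ (X_sub_ne i)
  linear_combination -h1 - h2

/-- exponent vector of the staircase -/
noncomputable def rho (n : ℕ) : Fin (n+1) →₀ ℕ := Finsupp.equivFunOnFinite.symm (fun i => n - (i:ℕ))

lemma S_rev (hS : IsSchubertFamily S) : S Fin.revPerm = monomial (rho n) 1 := by
  rw [hS.1, monomial_eq, Finsupp.prod_fintype]
  · simp [rho]
  · simp

lemma mapDomain_swap_apply (c : Fin (n+1) →₀ ℕ) (i : Fin n) (j : Fin (n+1)) :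
    (c.mapDomain (Equiv.swap i.castSucc i.succ)) j = c (Equiv.swap i.castSucc i.succ j) := by
  conv_lhs => rw [← Equiv.swap_apply_self i.castSucc i.succ j]
  exact Finsupp.mapDomain_apply (Equiv.injective _) _ _

/-- the step from a monomial -/
lemma mono_step (hS : IsSchubertFamily S) (σ : Equiv.Perm (Fin (n+1))) (i : Fin n)
    (c : Fin (n+1) →₀ ℕ) (hc : S σ = monomial c 1) (hi : c i.castSucc = c i.succ + 1) :
    len σ = len (simpleT i * σ) + 1 ∧
      S (simpleT i * σ) = monomial (c - Finsupp.single i.castSucc 1) 1 := by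
  have hne : i.castSucc ≠ i.succ := by simp [Fin.ext_iff]
  have h1 : len σ = len (simpleT i * σ) + 1 := by
    refine (len_mul i σ).resolve_left fun h => ?_
    have h2 := symm_of_asc hS σ i h
    rw [hc, rename_monomial, monomial_left_inj one_ne_zero] at h2
    have h3 := DFunLike.congr_fun h2 i.succ
    rw [mapDomain_swap_apply, Equiv.swap_apply_right] at h3
    omega
  refine ⟨h1, ?_⟩
  apply mul_left_cancel₀ (X_sub_ne i)
  rw [hS.2 σ i h1, hc, rename_monomial, sub_mul]
  congr 1
  · rw [X, monomial_mul, one_mul]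
    refine congrArg (fun e => monomial e (1:ℂ)) ?_
    refine Finsupp.ext fun j => ?_
    by_cases hj : j = i.castSucc
    · subst hj; simp; omega
    · simp [Finsupp.single_apply, Ne.symm hj]
  · rw [X, monomial_mul, one_mul]
    refine congrArg (fun e => monomial e (1:ℂ)) ?_
    refine Finsupp.ext fun j => ?_
    rw [mapDomain_swap_apply]
    by_cases hj : j = i.castSucc
    · subst hj
      simp [hne.symm, hi]
    · by_cases hj' : j = i.succ
      · subst hj'
        simp [hi, hne]; omega
      · rw [Equiv.swap_apply_of_ne_of_ne hj hj']
        simp [Finsupp.single_apply, Ne.symm hj, Ne.symm hj']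

lemma S_one_aux (hS : IsSchubertFamily S) (m : ℕ) : ∀ (σ : Equiv.Perm (Fin (n+1)))
    (c : Fin (n+1) →₀ ℕ), S σ = monomial c 1 → c (Fin.last n) = 0 →
    (∀ i : Fin n, c i.castSucc = c i.succ ∨ c i.castSucc = c i.succ + 1) →
    len σ = ∑ j, c j → len σ = m → S 1 = 1 := by
  induction m with
  | zero =>
    intro σ c h1 h2 h3 h4 h5
    have h6 := eq_one_of_len σ h5
    have : c = 0 := by
      ext j
      have := h4.symm.trans h5
      rw [Finset.sum_eq_zero_iff] at this
      exact this j (Finset.mem_univ _)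
    rw [← h6, h1, this]
    rfl
  | succ m ih =>
    intro σ c h1 h2 h3 h4 h5
    have hex : ∃ i : Fin n, c i.castSucc = c i.succ + 1 := by
      by_contra hc
      push Not at hc
      have h6 : ∀ j, c j = 0 := by
        intro j
        induction j using Fin.reverseInduction with
        | last => exact h2
        | cast i hi => rw [(h3 i).resolve_right (hc i), hi]
      simp [h6] at h4
      omega
    obtain ⟨i, hi, hmin⟩ : ∃ i : Fin n, c i.castSucc = c i.succ + 1 ∧
        ∀ k : Fin n, k < i → ¬ (c k.castSucc = c k.succ + 1) := by
      classical
      obtain ⟨i, hi, hm⟩ := WellFounded.has_min (wellFounded_lt (α := Fin n))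
        {i | c i.castSucc = c i.succ + 1} hex
      exact ⟨i, hi, fun k hk hk' => hm k hk' hk⟩
    obtain ⟨h6, h7⟩ := mono_step hS σ i c h1 hi
    have hadd : c = (c - Finsupp.single i.castSucc 1) + Finsupp.single i.castSucc 1 := by
      ext j
      by_cases hj : j = i.castSucc
      · subst hj; simp; omega
      · simp [Finsupp.single_apply, Ne.symm hj]
    have hv : ∀ j, (c - Finsupp.single i.castSucc 1 : Fin (n+1) →₀ ℕ) j =
        if j = i.castSucc then c j - 1 else c j := by
      intro j
      by_cases hj : j = i.castSucc
      · subst hj; simp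
      · simp [Finsupp.single_apply, hj, Ne.symm hj]
    refine ih (simpleT i * σ) _ h7 ?_ ?_ ?_ (by omega)
    · simp [h2]
    · intro k
      have hk := h3 k
      rw [hv, hv]
      have hki : k.castSucc = i.castSucc ↔ k = i := by simp
      by_cases hki : k = i
      · subst hki
        have : k.succ ≠ k.castSucc := by simp [Fin.ext_iff]
        simp [this]; omega
      · have h8 : k.castSucc ≠ i.castSucc := by simpa using hki
        rw [if_neg h8]
        by_cases h9 : k.succ = i.castSucc
        · have h10 : k < i := by
            rw [Fin.ext_iff] at h9; simp at h9
            rw [Fin.lt_def]; omega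
          have h11 := hk.resolve_right (hmin k h10)
          rw [if_pos h9]
          rw [h9] at *
          omega
        · rw [if_neg h9]; exact hk
    · rw [hadd] at h4
      simp only [Finsupp.coe_add, Pi.add_apply, Finset.sum_add_distrib] at h4
      have h12 : ∑ j, (Finsupp.single i.castSucc 1 : Fin (n+1) →₀ ℕ) j = 1 := by
        simp [Finsupp.single_apply]
      rw [h12] at h4
      omega

lemma S_one (hS : IsSchubertFamily S) : S 1 = 1 := by
  refine S_one_aux hS _ Fin.revPerm (rho n) (S_rev hS) (by simp [rho]) ?_ ?_ rfl
  · intro i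
    right
    simp [rho]; omega
  · rw [len_rev]; simp [rho]

lemma eul_S (hS : IsSchubertFamily S) : ∀ σ, eul (S σ) = (len σ : MvPolynomial (Fin (n+1)) ℂ) * S σ := by
  apply down_induction
  · rw [S_rev hS, len_rev, eul, mkDerivation_monomial, one_smul, Finsupp.sum_fintype _ _ (by simp)]
    push_cast
    rw [Finset.sum_mul]
    apply Finset.sum_congr rfl
    intro i _
    have hr : rho n i = n - (i:ℕ) := rfl
    rw [smul_eq_mul, X, monomial_mul, mul_one, hr]
    by_cases h0 : n - (i:ℕ) = 0
    · simp [h0]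
    · have : rho n - Finsupp.single i 1 + Finsupp.single i 1 = rho n := by
        ext j
        by_cases hj : j = i
        · subst hj; simp [hr]; omega
        · simp [Finsupp.single_apply, Ne.symm hj]
      rw [this, ← map_natCast (C : ℂ →+* MvPolynomial (Fin (n+1)) ℂ), C_mul_monomial, mul_one]
  · intro σ i hl h
    have h1 := hS.2 σ i hl
    have h2 := congrArg eul h1
    rw [map_sub, ← rename_eul, h, Derivation.leibniz, map_mul, map_natCast] at h2
    have h3 : eul (X i.castSucc - X i.succ : MvPolynomial (Fin (n+1)) ℂ)
      = X i.castSucc - X i.succ := by simp [eul]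
    rw [h3, hl] at h2
    apply mul_left_cancel₀ (X_sub_ne i)
    push_cast at h2
    simp only [smul_eq_mul] at h2
    linear_combination h2 - (len (simpleT i * σ) + 1 : MvPolynomial (Fin (n+1)) ℂ) * h1

lemma nab_S (hS : IsSchubertFamily S) : ∀ σ, nab (S σ) =
    ∑ k : Fin n, if len σ = len (σ * simpleT k) + 1 then
      ((k : ℕ) + 1 : MvPolynomial (Fin (n+1)) ℂ) * S (σ * simpleT k) else 0 := by
  apply down_induction
  · have hstep : ∀ k : Fin n, (if len (Fin.revPerm : Equiv.Perm (Fin (n+1))) =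
        len (Fin.revPerm * simpleT k) + 1 then
      ((k : ℕ) + 1 : MvPolynomial (Fin (n+1)) ℂ) * S (Fin.revPerm * simpleT k) else 0) =
      ((k : ℕ) + 1 : MvPolynomial (Fin (n+1)) ℂ) *
        monomial (rho n - Finsupp.single (Fin.rev k).castSucc 1) 1 := by
      intro k
      have hcomm : Fin.revPerm * simpleT k = simpleT (Fin.rev k) * Fin.revPerm := by
        unfold simpleT
        rw [Equiv.mul_swap_eq_swap_mul, Fin.revPerm_apply, Fin.revPerm_apply, Fin.rev_castSucc,
          Fin.rev_succ, Equiv.swap_comm]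
      obtain ⟨h1, h2⟩ := mono_step hS Fin.revPerm (Fin.rev k) (rho n) (S_rev hS)
        (by simp [rho]; omega)
      rw [hcomm, if_pos h1, h2]
    rw [Finset.sum_congr rfl (fun k _ => hstep k)]
    rw [S_rev hS, nab, mkDerivation_monomial, one_smul, Finsupp.sum_fintype _ _ (by simp),
      Fin.sum_univ_castSucc]
    have hlast : rho n (Fin.last n) = 0 := by simp [rho]
    rw [hlast]
    simp only [Nat.cast_zero, map_zero, zero_smul, add_zero]
    rw [← Equiv.sum_comp Fin.revPerm]
    apply Finset.sum_congr rfl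
    intro k _
    have hr : rho n (Fin.revPerm k).castSucc = (k:ℕ) + 1 := by simp [rho]; omega
    rw [hr]
    have : ((k : ℕ) + 1 : MvPolynomial (Fin (n+1)) ℂ) = C (((k:ℕ) + 1 : ℕ) : ℂ) := by simp
    rw [this, C_mul_monomial]
    simp
  · intro σ i hl h
    have h1 := hS.2 σ i hl
    have h2 := congrArg nab h1
    rw [map_sub, ← rename_nab, h, Derivation.leibniz] at h2
    have h3 : nab (X i.castSucc - X i.succ : MvPolynomial (Fin (n+1)) ℂ) = 0 := by simp [nab]
    rw [h3, smul_zero, add_zero, smul_eq_mul] at h2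
    apply mul_left_cancel₀ (X_sub_ne i)
    rw [h2, map_sum, ← Finset.sum_sub_distrib, Finset.mul_sum]
    apply Finset.sum_congr rfl
    intro k _
    have a1 := len_mul i (σ * simpleT k)
    have a2 := len_mul_right k σ
    have a3 := len_mul_right k (simpleT i * σ)
    rw [mul_assoc] at *
    by_cases b1 : len σ = len (σ * simpleT k) + 1
    · rw [if_pos b1, map_mul, map_add, map_natCast, map_one]
      by_cases b2 : len (σ * simpleT k) = len (simpleT i * (σ * simpleT k)) + 1
      · rw [if_pos (by omega)]
        linear_combination - ((k:ℕ) + 1 : MvPolynomial (Fin (n+1)) ℂ) * hS.2 (σ * simpleT k) i b2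
      · rw [if_neg (by omega), symm_of_asc hS _ i (a1.resolve_right b2)]
        ring
    · rw [if_neg b1, if_neg (by omega)]
      simp

end poly

section fin
variable {n : ℕ}

noncomputable def FF (m : ℕ) (σ : Equiv.Perm (Fin (n+1))) : ℂ :=
  ∑ w ∈ Finset.univ.filter
          (fun w : Fin m → Fin n => (List.ofFn fun t => simpleT (w t)).prod = σ),
        ∏ t : Fin m, ((w t : ℕ) + 1 : ℂ)

lemma FF_zero_of_lt (m : ℕ) (σ : Equiv.Perm (Fin (n+1))) (h : m < len σ) : FF m σ = 0 := by
  unfold FF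
  apply Finset.sum_eq_zero
  intro w hw
  exfalso
  have hw := (Finset.mem_filter.1 hw).2
  have := len_le_word (List.ofFn w)
  rw [List.map_ofFn, List.length_ofFn] at this
  have e : (List.ofFn (simpleT ∘ w)).prod = σ := hw
  rw [e] at this
  omega

lemma FF_succ (m : ℕ) (σ : Equiv.Perm (Fin (n+1))) :
    FF (m+1) σ = ∑ k : Fin n, ((k:ℕ) + 1 : ℂ) * FF m (σ * simpleT k) := by
  unfold FF
  simp only [Finset.sum_filter]
  rw [← (Fin.snocEquiv (fun _ : Fin (m+1) => Fin n)).sum_comp, Fintype.sum_prod_type]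
  apply Finset.sum_congr rfl
  intro k _
  rw [Finset.mul_sum]
  apply Finset.sum_congr rfl
  intro w _
  have : (List.ofFn fun t => simpleT ((Fin.snocEquiv (fun _ : Fin (m+1) => Fin n)) (k, w) t)).prod
      = (List.ofFn fun t => simpleT (w t)).prod * simpleT k := by
    rw [List.ofFn_succ', List.concat_eq_append, List.prod_append]
    simp [Fin.snocEquiv]
  rw [this]
  have iff : (List.ofFn fun t => simpleT (w t)).prod * simpleT k = σ ↔
      (List.ofFn fun t => simpleT (w t)).prod = σ * simpleT k := by
    rw [← mul_right_cancel_iff (a := simpleT k) (b := (List.ofFn fun t => simpleT (w t)).prod),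
      mul_simpleT_cancel]
  simp only [iff]
  split_ifs
  · rw [Fin.prod_univ_castSucc]
    simp [Fin.snocEquiv, mul_comm]
  · simp

lemma main_aux {S : Equiv.Perm (Fin (n+1)) → MvPolynomial (Fin (n+1)) ℂ}
    (hS : IsSchubertFamily S) (m : ℕ) : ∀ σ, len σ = m →
    (Nat.factorial m : ℂ) * eval (fun _ => (1 : ℂ)) (S σ) = FF m σ := by
  induction m with
  | zero =>
    intro σ h
    rw [eq_one_of_len σ h, S_one hS]
    simp [FF]
  | succ m ih =>
    intro σ h
    have h1 := eval_nab_eq (S σ)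
    rw [eul_S hS, nab_S hS, map_sum, map_mul, map_natCast, h] at h1
    rw [Nat.factorial_succ, FF_succ, Nat.cast_mul, mul_comm ((m+1 : ℕ) : ℂ), mul_assoc, ← h1,
      Finset.mul_sum]
    apply Finset.sum_congr rfl
    intro k _
    split_ifs with hk
    · rw [← ih (σ * simpleT k) (by omega)]
      simp
      ring
    · rw [FF_zero_of_lt m (σ * simpleT k) (by have := len_mul_right k σ; omega)]
      simp

end fin

/-- Macdonald's reduced word identity:
`ℓ! ⬝ 𝔖_σ(1,…,1) = Σ_{reduced words (i₁,…,i_ℓ) for σ} i₁ ⋯ i_ℓ`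
(reduced words are encoded as functions `Fin ℓ(σ) → Fin n`, indices `1`-based so the
factor for letter `i` is `i + 1`). -/
theorem macdonald_identity {n : ℕ}
    (S : Equiv.Perm (Fin (n+1)) → MvPolynomial (Fin (n+1)) ℂ)
    (hS : IsSchubertFamily S) (σ : Equiv.Perm (Fin (n+1))) :
    (Nat.factorial (len σ) : ℂ) * eval (fun _ => (1 : ℂ)) (S σ) =
      ∑ w ∈ Finset.univ.filter
          (fun w : Fin (len σ) → Fin n => (List.ofFn fun t => simpleT (w t)).prod = σ),
        ∏ t : Fin (len σ), ((w t : ℕ) + 1 : ℂ) := by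
  exact main_aux hS _ σ rfl
end

section
/- The Schubert polynomial 𝔖_σ is a single monomial if and only if σ avoids the pattern 132. -/
open Equiv MvPolynomial

namespace SchubAux

variable {n : ℕ}

/-- The Lehmer code. -/
def code (w : Equiv.Perm (Fin (n+1))) (k : Fin (n+1)) : ℕ :=
  (Finset.univ.filter (fun j => k < j ∧ w j < w k)).card

/-- The code as a finsupp. -/
noncomputable def codeF (w : Equiv.Perm (Fin (n+1))) : Fin (n+1) →₀ ℕ :=
  Finsupp.equivFunOnFinite.symm (code w)

lemma codeF_apply (w : Equiv.Perm (Fin (n+1))) (k) : codeF w k = code w k := rfl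

def inv (w : Equiv.Perm (Fin (n+1))) : ℕ := ∑ k, code w k

lemma simpleT_left (i : Fin n) : simpleT i i.castSucc = i.succ := by simp [simpleT]
lemma simpleT_right (i : Fin n) : simpleT i i.succ = i.castSucc := by simp [simpleT]
lemma simpleT_ne (i : Fin n) (k : Fin (n+1)) (h1 : k ≠ i.castSucc) (h2 : k ≠ i.succ) :
    simpleT i k = k := Equiv.swap_apply_of_ne_of_ne h1 h2
lemma simpleT_sq (i : Fin n) : simpleT i * simpleT i = 1 := by simp [simpleT]
lemma simpleT_inv (i : Fin n) : (simpleT i)⁻¹ = simpleT i := by simp [simpleT]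

lemma code_left (w : Equiv.Perm (Fin (n+1))) (i : Fin n) (h : w i.castSucc < w i.succ) :
    code (w * simpleT i) i.castSucc = code w i.succ + 1 := by
  unfold code
  rw [← Finset.card_insert_of_notMem (a := i.succ) (by simp)]
  congr 1
  ext j
  simp only [Finset.mem_filter, Finset.mem_univ, true_and, Finset.mem_insert, Perm.mul_apply,
    simpleT_left]
  by_cases h1 : j = i.succ
  · subst h1; simp [simpleT_right, h]
  · by_cases h2 : j = i.castSucc
    · subst h2
      simp only [lt_irrefl, false_and, false_iff, not_or, not_and]
      refine ⟨h1, fun h3 => ?_⟩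
      exact absurd h3 (not_lt.2 (Fin.castSucc_lt_succ).le)
    · rw [simpleT_ne i j h2 h1]
      have : i.castSucc < j ↔ i.succ < j := by
        simp only [Fin.lt_def, Fin.ext_iff, Fin.val_castSucc, Fin.val_succ] at *
        omega
      simp [this, h1]

lemma code_right (w : Equiv.Perm (Fin (n+1))) (i : Fin n) (h : w i.castSucc < w i.succ) :
    code (w * simpleT i) i.succ = code w i.castSucc := by
  unfold code
  congr 1
  ext j
  simp only [Finset.mem_filter, Finset.mem_univ, true_and, Perm.mul_apply,
    simpleT_right]
  by_cases h1 : j = i.succ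
  · subst h1; simp [h.le]
  · by_cases h2 : j = i.castSucc
    · subst h2
      simp [(Fin.castSucc_lt_succ (i := i)).le]
    · rw [simpleT_ne i j h2 h1]
      have : i.castSucc < j ↔ i.succ < j := by
        simp only [Fin.lt_def, Fin.ext_iff, Fin.val_castSucc, Fin.val_succ] at *
        omega
      simp [this]

lemma code_other (w : Equiv.Perm (Fin (n+1))) (i : Fin n) (k : Fin (n+1))
    (h1 : k ≠ i.castSucc) (h2 : k ≠ i.succ) :
    code (w * simpleT i) k = code w k := by
  unfold code
  apply Finset.card_bij (fun j _ => simpleT i j)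
  · intro j hj
    simp only [Finset.mem_filter, Finset.mem_univ, true_and, Perm.mul_apply,
      simpleT_ne i k h1 h2] at hj ⊢
    refine ⟨?_, hj.2⟩
    have hj1 := hj.1
    by_cases h3 : j = i.succ
    · subst h3; rw [simpleT_right]
      simp only [Fin.lt_def, Fin.ext_iff, Fin.val_castSucc, Fin.val_succ, ne_eq] at *
      omega
    · by_cases h4 : j = i.castSucc
      · subst h4; rw [simpleT_left]
        simp only [Fin.lt_def, Fin.ext_iff, Fin.val_castSucc, Fin.val_succ, ne_eq] at *
        omega
      · rw [simpleT_ne i j h4 h3]; exact hj1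
  · intro a _ b _ hab; exact (simpleT i).injective hab
  · intro j hj
    simp only [Finset.mem_filter, Finset.mem_univ, true_and, Perm.mul_apply,
      simpleT_ne i k h1 h2] at hj ⊢
    have hinv : simpleT i (simpleT i j) = j := by
      rw [← Perm.mul_apply, simpleT_sq]; rfl
    refine ⟨simpleT i j, ⟨?_, by rw [hinv]; exact hj.2⟩, hinv⟩
    have hj1 := hj.1
    by_cases h3 : j = i.succ
    · subst h3; rw [simpleT_right]
      simp only [Fin.lt_def, Fin.ext_iff, Fin.val_castSucc, Fin.val_succ, ne_eq] at *
      omega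
    · by_cases h4 : j = i.castSucc
      · subst h4; rw [simpleT_left]
        simp only [Fin.lt_def, Fin.ext_iff, Fin.val_castSucc, Fin.val_succ, ne_eq] at *
        omega
      · rw [simpleT_ne i j h4 h3]; exact hj1

lemma cs_ne (i : Fin n) : i.castSucc ≠ i.succ := by
  simp [Fin.ext_iff]

lemma inv_mul (w : Equiv.Perm (Fin (n+1))) (i : Fin n) (h : w i.castSucc < w i.succ) :
    inv (w * simpleT i) = inv w + 1 := by
  unfold inv
  have hm : i.succ ∈ Finset.univ.erase i.castSucc := by simp [(cs_ne i).symm]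
  rw [← Finset.add_sum_erase _ _ (Finset.mem_univ i.castSucc),
    ← Finset.add_sum_erase _ _ hm,
    ← Finset.add_sum_erase _ (code w) (Finset.mem_univ i.castSucc),
    ← Finset.add_sum_erase _ (code w) hm, code_left w i h, code_right w i h]
  have : ∑ x ∈ (Finset.univ.erase i.castSucc).erase i.succ, code (w * simpleT i) x
      = ∑ x ∈ (Finset.univ.erase i.castSucc).erase i.succ, code w x := by
    apply Finset.sum_congr rfl
    intro k hk
    simp only [Finset.mem_erase, Finset.mem_univ, and_true] at hk
    exact code_other w i k hk.2 hk.1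
  rw [this]; omega

lemma asc_or (w : Equiv.Perm (Fin (n+1))) (i : Fin n) (h : ¬ w i.castSucc < w i.succ) :
    w i.succ < w i.castSucc :=
  lt_of_le_of_ne (not_lt.1 h) (fun h => cs_ne i (w.injective h.symm))

lemma inv_mul' (w : Equiv.Perm (Fin (n+1))) (i : Fin n) (h : ¬ w i.castSucc < w i.succ) :
    inv w = inv (w * simpleT i) + 1 := by
  have h' := asc_or w i h
  rw [← inv_mul (w * simpleT i) i (by simpa [simpleT_left, simpleT_right] using h'),
    mul_assoc, simpleT_sq, mul_one]

lemma inv_one : inv (1 : Equiv.Perm (Fin (n+1))) = 0 := by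
  unfold inv
  apply Finset.sum_eq_zero
  intro k _
  unfold code
  rw [Finset.card_eq_zero, Finset.filter_eq_empty_iff]
  intro j _ h
  exact absurd h.1 (not_lt.2 h.2.le)

lemma inv_le_word (l : List (Fin n)) : inv ((l.map simpleT).prod)⁻¹ ≤ l.length := by
  induction l with
  | nil => simp [inv_one]
  | cons i l ih =>
    simp only [List.map_cons, List.prod_cons, mul_inv_rev, simpleT_inv, List.length_cons]
    by_cases h : ((l.map simpleT).prod)⁻¹ i.castSucc < ((l.map simpleT).prod)⁻¹ i.succ
    · rw [inv_mul _ i h]; omega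
    · have := inv_mul' _ i h
      omega

lemma eq_one_of_asc (w : Equiv.Perm (Fin (n+1))) (h : ∀ i : Fin n, w i.castSucc < w i.succ) :
    w = 1 := by
  have hm : StrictMono w := Fin.strictMono_iff_lt_succ.2 h
  have : (hm.orderIsoOfSurjective w w.surjective) = OrderIso.refl _ := Subsingleton.elim _ _
  ext k
  have := congrArg (fun e => e k) this
  simpa using congrArg Fin.val this

lemma eq_rev_of_desc (w : Equiv.Perm (Fin (n+1))) (h : ∀ i : Fin n, ¬ w i.castSucc < w i.succ) :
    w = Fin.revPerm := by
  have hm : StrictAnti w := Fin.strictAnti_iff_succ_lt.2 (fun i => asc_or w i (h i))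
  have h1 : Fin.revPerm * w = 1 := by
    apply eq_one_of_asc
    intro i
    simp only [Perm.mul_apply, Fin.revPerm_apply, Fin.rev_lt_rev]
    exact asc_or w i (h i)
  have h2 : (Fin.revPerm : Equiv.Perm (Fin (n+1))) * Fin.revPerm = 1 := by
    ext k; simp
  calc w = (Fin.revPerm * Fin.revPerm) * w := by rw [h2, one_mul]
    _ = Fin.revPerm := by rw [mul_assoc, h1, mul_one]

lemma exists_word (k : ℕ) : ∀ w : Equiv.Perm (Fin (n+1)), inv w = k →
    ∃ l : List (Fin n), l.length = k ∧ (l.map simpleT).prod = w⁻¹ := by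
  induction k with
  | zero =>
    intro w hw
    have : w = 1 := by
      apply eq_one_of_asc
      intro i
      by_contra h
      have := inv_mul' w i h
      omega
    subst this
    exact ⟨[], by simp⟩
  | succ k ih =>
    intro w hw
    by_cases h : ∀ i : Fin n, w i.castSucc < w i.succ
    · rw [eq_one_of_asc w h, inv_one] at hw; omega
    · push Not at h
      obtain ⟨i, hi⟩ := h
      have := inv_mul' w i (not_lt.2 hi)
      obtain ⟨l, hl, hp⟩ := ih (w * simpleT i) (by omega)
      refine ⟨i :: l, by simp [hl], ?_⟩
      rw [List.map_cons, List.prod_cons, hp, mul_inv_rev, simpleT_inv, ← mul_assoc, simpleT_sq,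
        one_mul]

lemma len_eq (w : Equiv.Perm (Fin (n+1))) : len w⁻¹ = inv w := by
  unfold len
  apply le_antisymm
  · exact Nat.sInf_le (exists_word _ w rfl)
  · apply le_csInf
    · exact ⟨_, exists_word _ w rfl⟩
    · rintro k ⟨l, rfl, hl⟩
      have := inv_le_word l
      rwa [hl, inv_inv] at this

lemma code_rev (k : Fin (n+1)) : code (Fin.revPerm : Equiv.Perm (Fin (n+1))) k = n - k := by
  unfold code
  have : (Finset.univ.filter (fun j => k < j ∧ Fin.revPerm j < Fin.revPerm k)) = Finset.Ioi k := by
    ext j; simp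
  rw [this, Fin.card_Ioi]; omega

lemma inv_bound (w : Equiv.Perm (Fin (n+1))) : inv w ≤ (n+1) * (n+1) := by
  unfold inv
  calc ∑ k, code w k ≤ ∑ k : Fin (n+1), (n+1) := by
        apply Finset.sum_le_sum
        intro k _
        exact (Finset.card_le_univ _).trans (by simp)
    _ = _ := by simp

/-- descending induction -/
lemma desc_ind (P : Equiv.Perm (Fin (n+1)) → Prop)
    (h : ∀ w, (∀ i : Fin n, w i.castSucc < w i.succ → P (w * simpleT i)) → P w) (w) : P w := by
  suffices H : ∀ k, ∀ w : Equiv.Perm (Fin (n+1)), (n+1)*(n+1) - inv w = k → P w from H _ w rfl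
  intro k
  induction k with
  | zero =>
    intro w hw
    apply h
    intro i hi
    have h1 := inv_mul w i hi
    have h2 := inv_bound (w * simpleT i)
    omega
  | succ k ih =>
    intro w hw
    apply h
    intro i hi
    have h1 := inv_mul w i hi
    apply ih
    omega

/-- swap of exponents -/
noncomputable def sw (a b : Fin (n+1)) (m : Fin (n+1) →₀ ℕ) : Fin (n+1) →₀ ℕ :=
  m.mapDomain (Equiv.swap a b)

lemma sw_apply (a b : Fin (n+1)) (m : Fin (n+1) →₀ ℕ) (k) : sw a b m k = m (Equiv.swap a b k) := by
  unfold sw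
  conv_lhs => rw [← Equiv.swap_apply_self a b k]
  rw [Finsupp.mapDomain_apply (Equiv.injective _)]

lemma sw_sw (a b : Fin (n+1)) (m : Fin (n+1) →₀ ℕ) : sw a b (sw a b m) = m := by
  ext k; simp [sw_apply]

lemma coeff_swap (a b : Fin (n+1)) (m : Fin (n+1) →₀ ℕ) (f : MvPolynomial (Fin (n+1)) ℂ) :
    coeff m (rename (Equiv.swap a b) f) = coeff (sw a b m) f := by
  conv_lhs => rw [← sw_sw a b m]
  exact coeff_rename_mapDomain _ (Equiv.injective _) _ _

lemma g_symm {a b : Fin (n+1)} (hab : a ≠ b) {f g : MvPolynomial (Fin (n+1)) ℂ}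
    (h : (X a - X b) * g = f - rename (Equiv.swap a b) f) :
    rename (Equiv.swap a b) g = g := by
  have h1 := congrArg (rename (Equiv.swap a b)) h
  have hX : (X a - X b : MvPolynomial (Fin (n+1)) ℂ) ≠ 0 := by
    rw [sub_ne_zero]; intro h; exact hab (X_injective h)
  have hc : (⇑(Equiv.swap a b) ∘ ⇑(Equiv.swap a b)) = id := by ext; simp
  simp only [map_mul, map_sub, rename_X, Equiv.swap_apply_left, Equiv.swap_apply_right,
    rename_rename, hc, rename_id_apply] at h1
  apply mul_left_cancel₀ hX
  linear_combination (-1 : MvPolynomial (Fin (n+1)) ℂ) * h1 - h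

lemma coeff_rel {a b : Fin (n+1)} {f g : MvPolynomial (Fin (n+1)) ℂ}
    (h : (X a - X b) * g = f - rename (Equiv.swap a b) f) (d : Fin (n+1) →₀ ℕ) :
    (if a ∈ (d + Finsupp.single b 1).support then
      coeff (d + Finsupp.single b 1 - Finsupp.single a 1) g else 0) - coeff d g =
    coeff (d + Finsupp.single b 1) f - coeff (sw a b (d + Finsupp.single b 1)) f := by
  have h1 := congrArg (coeff (d + Finsupp.single b 1)) h
  rw [sub_mul, coeff_sub, coeff_sub, coeff_swap, coeff_X_mul'] at h1
  rw [← h1, add_comm d, coeff_X_mul]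

lemma exists_f {a b : Fin (n+1)} (hab : a ≠ b) {f g : MvPolynomial (Fin (n+1)) ℂ}
    (h : (X a - X b) * g = f - rename (Equiv.swap a b) f) (p : ℕ) :
    ∀ d : Fin (n+1) →₀ ℕ, d a = p → coeff d g ≠ 0 →
    ∃ e, coeff e f ≠ 0 ∧ (∀ k, k ≠ a → k ≠ b → e k = d k) ∧ (d b + 1 ≤ e a ∨ d b + 1 ≤ e b) := by
  induction p with
  | zero =>
    intro d hd hc
    have h1 := coeff_rel h d
    rw [if_neg (by simp [hd, hab.symm])] at h1
    by_cases h2 : coeff (d + Finsupp.single b 1) f = 0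
    · refine ⟨sw a b (d + Finsupp.single b 1), ?_, ?_, ?_⟩
      · intro h3; rw [h2, h3] at h1; apply hc; simpa using h1
      · intro k hka hkb
        rw [sw_apply, Equiv.swap_apply_of_ne_of_ne hka hkb]; simp [hkb.symm]
      · left; simp [sw_apply]
    · refine ⟨_, h2, ?_, ?_⟩
      · intro k hka hkb; simp [hkb.symm]
      · right; simp
  | succ p ih =>
    intro d hd hc
    have h1 := coeff_rel h d
    rw [if_pos (by simp [hd])] at h1
    by_cases h4 : coeff (d + Finsupp.single b 1 - Finsupp.single a 1) g = 0
    · by_cases h2 : coeff (d + Finsupp.single b 1) f = 0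
      · refine ⟨sw a b (d + Finsupp.single b 1), ?_, ?_, ?_⟩
        · intro h3; rw [h2, h3, h4] at h1; apply hc; simpa using h1
        · intro k hka hkb
          rw [sw_apply, Equiv.swap_apply_of_ne_of_ne hka hkb]; simp [hkb.symm]
        · left; simp [sw_apply]
      · refine ⟨_, h2, ?_, ?_⟩
        · intro k hka hkb; simp [hkb.symm]
        · right; simp
    · obtain ⟨e, he, hk, hb⟩ := ih _ (by simp [hd, hab.symm]) h4
      refine ⟨e, he, ?_, ?_⟩
      · intro k hka hkb
        rw [hk k hka hkb]; simp [hka.symm, hkb.symm]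
      · simp [hab] at hb
        omega

/-- staircase support -/
def St (f : MvPolynomial (Fin (n+1)) ℂ) : Prop :=
  ∀ d, coeff d f ≠ 0 → ∀ k : Fin (n+1), d k ≤ n - k

lemma St_step (i : Fin n) {f g : MvPolynomial (Fin (n+1)) ℂ}
    (h : (X i.castSucc - X i.succ) * g = f - rename (Equiv.swap i.castSucc i.succ) f)
    (hf : St f) : St g := by
  have key : ∀ d, coeff d g ≠ 0 → ∀ k : Fin (n+1), k ≠ i.castSucc → d k ≤ n - k := by
    intro d hd k hk
    obtain ⟨e, he, h1, h2⟩ := exists_f (cs_ne i) h _ d rfl hd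
    by_cases hk2 : k = i.succ
    · subst hk2
      have h3 := hf e he i.castSucc
      have h4 := hf e he i.succ
      have := i.2
      simp only [Fin.val_castSucc, Fin.val_succ] at *
      omega
    · rw [← h1 k hk hk2]; exact hf e he k
  intro d hd k
  by_cases hk : k = i.castSucc
  · subst hk
    have h1 : coeff (sw i.castSucc i.succ d) g ≠ 0 := by
      rw [← coeff_swap, g_symm (cs_ne i) h]; exact hd
    have := key _ h1 i.succ (cs_ne i).symm
    rw [sw_apply, Equiv.swap_apply_right] at this
    simp only [Fin.val_castSucc, Fin.val_succ] at *
    omega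
  · exact key d hd k hk

lemma code_last (w : Equiv.Perm (Fin (n+1))) (i : Fin n)
    (h : ∀ j : Fin n, i < j → ¬ w j.castSucc < w j.succ) : code w i.succ = n - (i + 1) := by
  unfold code
  have key : ∀ m : ℕ, ∀ hm : m < n + 1, (i : ℕ) + 1 ≤ m → w ⟨m, hm⟩ ≤ w i.succ := by
    intro m
    induction m with
    | zero => intro _ h; omega
    | succ m ih =>
      intro hm hi
      by_cases he : (i : ℕ) = m
      · apply le_of_eq; congr 1; ext; simp [he]
      · have h1 := ih (by omega) (by omega)
        have h2 := asc_or w ⟨m, by omega⟩ (h ⟨m, by omega⟩ (by rw [Fin.lt_def]; simp; omega))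
        exact h2.le.trans h1
  have : (Finset.univ.filter (fun j => i.succ < j ∧ w j < w i.succ)) = Finset.Ioi i.succ := by
    ext j
    simp only [Finset.mem_filter, Finset.mem_univ, true_and, Finset.mem_Ioi, and_iff_left_iff_imp]
    intro hj
    refine lt_of_le_of_ne (key j j.2 ?_) (fun h => hj.ne' (w.injective h))
    rw [Fin.lt_def] at hj; simp at hj; omega
  rw [this, Fin.card_Ioi]; simp

def Fam (T : Equiv.Perm (Fin (n+1)) → MvPolynomial (Fin (n+1)) ℂ) : Prop :=
  T Fin.revPerm = monomial (codeF Fin.revPerm) 1 ∧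
  ∀ (w : Equiv.Perm (Fin (n+1))) (i : Fin n), w i.castSucc < w i.succ →
    (X i.castSucc - X i.succ) * T w =
      T (w * simpleT i) - rename (Equiv.swap i.castSucc i.succ) (T (w * simpleT i))

lemma fam_of (S : Equiv.Perm (Fin (n+1)) → MvPolynomial (Fin (n+1)) ℂ)
    (hS : IsSchubertFamily S) : Fam (fun w => S w⁻¹) := by
  refine ⟨?_, ?_⟩
  · have : (Fin.revPerm : Equiv.Perm (Fin (n+1)))⁻¹ = Fin.revPerm := by
      rw [inv_eq_iff_mul_eq_one]; ext k; simp
    simp only [this]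
    rw [hS.1, monomial_eq, Finsupp.prod_fintype _ _ (by simp)]
    simp [codeF_apply, code_rev]
  · intro w i h
    have h1 := hS.2 (w * simpleT i)⁻¹ i
    have h2 : simpleT i * (w * simpleT i)⁻¹ = w⁻¹ := by
      rw [mul_inv_rev, simpleT_inv, ← mul_assoc, simpleT_sq, one_mul]
    rw [h2, len_eq, len_eq] at h1
    exact h1 (inv_mul w i h)

lemma fam_main (T : Equiv.Perm (Fin (n+1)) → MvPolynomial (Fin (n+1)) ℂ) (hT : Fam T) (w) :
    St (T w) ∧ coeff (codeF w) (T w) = 1 := by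
  induction w using desc_ind with
  | h w ih =>
  by_cases hw : ∀ i : Fin n, ¬ w i.castSucc < w i.succ
  · rw [eq_rev_of_desc w hw, hT.1]
    refine ⟨?_, by simp⟩
    intro d hd k
    rw [coeff_monomial] at hd
    have : codeF Fin.revPerm = d := by by_contra h; simp [h] at hd
    rw [← this, codeF_apply, code_rev]
  · push Not at hw
    have hne : (Finset.univ.filter (fun i : Fin n => w i.castSucc < w i.succ)).Nonempty := by
      obtain ⟨i, hi⟩ := hw; exact ⟨i, by simpa using hi⟩
    obtain ⟨i, hi, hmax⟩ := Finset.exists_max_image _ id hne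
    simp only [Finset.mem_filter, Finset.mem_univ, true_and, id] at hi hmax
    have hlast : ∀ j : Fin n, i < j → ¬ w j.castSucc < w j.succ :=
      fun j hj h => absurd (hmax j h) (not_le.2 hj)
    have hcl := code_last w i hlast
    obtain ⟨hSt, hco⟩ := ih i hi
    have hrel := hT.2 w i hi
    have hStw := St_step i hrel hSt
    refine ⟨hStw, ?_⟩
    have h1 := coeff_rel hrel (codeF w)
    have hsw : sw i.castSucc i.succ (codeF w + Finsupp.single i.succ 1)
        = codeF (w * simpleT i) := by
      ext k
      rw [sw_apply, codeF_apply]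
      by_cases hk1 : k = i.castSucc
      · subst hk1
        rw [code_left w i hi]; simp [codeF_apply]
      · by_cases hk2 : k = i.succ
        · subst hk2
          rw [code_right w i hi]; simp [codeF_apply, cs_ne]
        · rw [code_other w i k hk1 hk2, Equiv.swap_apply_of_ne_of_ne hk1 hk2]
          simp [codeF_apply, Ne.symm hk2]
    have hi2 := i.2
    have z1 : coeff (codeF w + Finsupp.single i.succ 1) (T (w * simpleT i)) = 0 := by
      by_contra h
      have := hSt _ h i.succ
      simp [codeF_apply, hcl] at this
    have z2 : coeff (codeF w + Finsupp.single i.succ 1 - Finsupp.single i.castSucc 1) (T w) = 0 := by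
      by_contra h
      have := hStw _ h i.succ
      simp [codeF_apply, hcl, cs_ne] at this
    rw [z1, z2, hsw, hco, ite_self] at h1
    simpa using h1

/-- dominance -/
def Dom (w : Equiv.Perm (Fin (n+1))) : Prop := ∀ i : Fin n, code w i.succ ≤ code w i.castSucc

lemma code_desc (w : Equiv.Perm (Fin (n+1))) (i : Fin n) (h : w i.succ < w i.castSucc) :
    code w i.succ < code w i.castSucc := by
  unfold code
  apply Finset.card_lt_card
  rw [Finset.ssubset_iff_of_subset]
  · exact ⟨i.succ, by simp [h, Fin.castSucc_lt_succ], by simp⟩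
  · intro j hj
    simp only [Finset.mem_filter, Finset.mem_univ, true_and] at hj ⊢
    exact ⟨lt_trans (Fin.castSucc_lt_succ) hj.1, hj.2.trans h⟩

lemma asc_subset (w : Equiv.Perm (Fin (n+1))) (i : Fin n) (h : w i.castSucc < w i.succ) :
    (Finset.univ.filter (fun j => i.castSucc < j ∧ w j < w i.castSucc)) ⊆
    (Finset.univ.filter (fun j => i.succ < j ∧ w j < w i.succ)) := by
  intro j hj
  simp only [Finset.mem_filter, Finset.mem_univ, true_and] at hj ⊢
  refine ⟨?_, hj.2.trans h⟩
  have : j ≠ i.succ := by rintro rfl; exact absurd hj.2 (not_lt.2 h.le)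
  have hj1 := hj.1
  simp only [Fin.lt_def, ne_eq, Fin.ext_iff, Fin.val_castSucc, Fin.val_succ] at *
  omega

lemma dom_of_avoid (w : Equiv.Perm (Fin (n+1))) (h : ¬ contains132 w) : Dom w := by
  intro i
  by_cases hi : w i.castSucc < w i.succ
  · apply Finset.card_le_card
    intro j hj
    simp only [Finset.mem_filter, Finset.mem_univ, true_and] at hj ⊢
    have h1 : i.castSucc < i.succ := Fin.castSucc_lt_succ
    refine ⟨h1.trans hj.1, ?_⟩
    by_contra h2
    apply h
    refine ⟨i.castSucc, i.succ, j, h1, hj.1, ?_, hj.2⟩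
    refine lt_of_le_of_ne (not_lt.1 h2) (fun h => ?_)
    exact (h1.trans hj.1).ne (w.injective h)
  · exact (code_desc w i (asc_or w i hi)).le

lemma avoid_of_dom (w : Equiv.Perm (Fin (n+1))) (h : Dom w) : ¬ contains132 w := by
  rintro ⟨a, b, c, hab, hbc, h1, h2⟩
  have key : ∀ m : ℕ, ∀ hm : m < n + 1, a.1 ≤ m → m ≤ b.1 → w ⟨m, hm⟩ < w c := by
    intro m
    induction m with
    | zero => 
      intro hm ha _
      have : (⟨0, hm⟩ : Fin (n+1)) = a := by ext; simp; omega
      rw [this]; exact h1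
    | succ m ih =>
      intro hm ha hb
      by_cases he : a.1 = m + 1
      · have : (⟨m+1, hm⟩ : Fin (n+1)) = a := by ext; simp; omega
        rw [this]; exact h1
      · have h3 := ih (by omega) (by omega) (by omega)
        by_contra h4
        have hne : w ⟨m+1, hm⟩ ≠ w c := by
          intro h; have := congrArg Fin.val (w.injective h)
          simp at this; rw [Fin.lt_def] at hbc; omega
        have h5 : w c < w ⟨m+1, hm⟩ := lt_of_le_of_ne (not_lt.1 h4) hne.symm
        let i : Fin n := ⟨m, by omega⟩
        have hi : w i.castSucc < w i.succ := h3.trans h5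
        have h6 : code w i.castSucc < code w i.succ := by
          unfold code
          apply Finset.card_lt_card
          rw [Finset.ssubset_iff_of_subset (asc_subset w i hi)]
          refine ⟨c, ?_, ?_⟩
          · simp only [Finset.mem_filter, Finset.mem_univ, true_and]
            refine ⟨?_, h5⟩
            rw [Fin.lt_def] at hbc ⊢; simp [i]; omega
          · simp only [Finset.mem_filter, Finset.mem_univ, true_and, not_and, not_lt]
            intro _; exact h3.le
        exact absurd (h i) (not_le.2 h6)
  exact absurd (key b b.2 hab.le le_rfl) (not_lt.2 h2.le)

lemma contains_inv {w : Equiv.Perm (Fin (n+1))} (h : contains132 w) : contains132 w⁻¹ := by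
  obtain ⟨a, b, c, hab, hbc, h1, h2⟩ := h
  exact ⟨w a, w c, w b, h1, h2, by simpa using hab, by simpa using hbc⟩

lemma mono_of_dom (T : Equiv.Perm (Fin (n+1)) → MvPolynomial (Fin (n+1)) ℂ) (hT : Fam T) (w) :
    Dom w → T w = monomial (codeF w) 1 := by
  induction w using desc_ind with
  | h w ih =>
  intro hD
  by_cases hw : ∀ i : Fin n, ¬ w i.castSucc < w i.succ
  · rw [eq_rev_of_desc w hw, hT.1]
  · push Not at hw
    have hne : (Finset.univ.filter (fun i : Fin n => w i.castSucc < w i.succ)).Nonempty := by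
      obtain ⟨i, hi⟩ := hw; exact ⟨i, by simpa using hi⟩
    obtain ⟨i, hi, hmin⟩ := Finset.exists_min_image _ id hne
    simp only [Finset.mem_filter, Finset.mem_univ, true_and, id] at hi hmin
    have heq : code w i.castSucc = code w i.succ :=
      le_antisymm (Finset.card_le_card (asc_subset w i hi)) (hD i)
    have hcode : codeF (w * simpleT i) = codeF w + Finsupp.single i.castSucc 1 := by
      ext k
      rw [codeF_apply]
      by_cases hk1 : k = i.castSucc
      · subst hk1
        rw [code_left w i hi]; simp [codeF_apply, heq]
      · by_cases hk2 : k = i.succ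
        · subst hk2
          rw [code_right w i hi]; simp [codeF_apply, cs_ne, heq]
        · rw [code_other w i k hk1 hk2]
          simp [codeF_apply, Ne.symm hk1]
    have hcode' : ∀ k, code (w * simpleT i) k = code w k + Finsupp.single i.castSucc 1 k := by
      intro k
      have := DFunLike.congr_fun hcode k
      simpa [codeF_apply] using this
    have hD' : Dom (w * simpleT i) := by
      intro k
      rw [hcode', hcode']
      by_cases hk : k.succ = i.castSucc
      · have h1 : ¬ w k.castSucc < w k.succ := by
          intro h
          have := hmin k h
          rw [Fin.le_def] at this
          have := congrArg Fin.val hk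
          simp at this
          omega
        have := code_desc w k (asc_or w k h1)
        rw [hk] at this ⊢
        simp; omega
      · rw [Finsupp.single_eq_of_ne hk]
        have := hD k
        omega
    have hm := ih i hi hD'
    have hrel := hT.2 w i hi
    have hX : (X i.castSucc - X i.succ : MvPolynomial (Fin (n+1)) ℂ) ≠ 0 := by
      rw [sub_ne_zero]; intro h; exact cs_ne i (X_injective h)
    apply mul_left_cancel₀ hX
    rw [hrel, hm, hcode, rename_monomial]
    have hsw : Finsupp.mapDomain (Equiv.swap i.castSucc i.succ)
        (codeF w + Finsupp.single i.castSucc 1) = codeF w + Finsupp.single i.succ 1 := by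
      rw [Finsupp.mapDomain_add, Finsupp.mapDomain_single, Equiv.swap_apply_left]
      congr 1
      ext k
      change sw _ _ _ k = _
      rw [sw_apply]
      by_cases hk1 : k = i.castSucc
      · subst hk1; simp [codeF_apply, heq]
      · by_cases hk2 : k = i.succ
        · subst hk2; simp [codeF_apply, heq]
        · rw [Equiv.swap_apply_of_ne_of_ne hk1 hk2]
    rw [hsw, sub_mul]
    simp only [X, monomial_mul, one_mul, add_comm]

lemma dom_of_mono (T : Equiv.Perm (Fin (n+1)) → MvPolynomial (Fin (n+1)) ℂ) (hT : Fam T) (w)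
    (d : Fin (n+1) →₀ ℕ) (c : ℂ) (hd : T w = monomial d c) : Dom w := by
  have h1 := (fam_main T hT w).2
  have hdc : d = codeF w := by
    by_contra h
    rw [hd, coeff_monomial, if_neg h] at h1
    exact zero_ne_one h1
  intro i
  by_cases hi : w i.castSucc < w i.succ
  · have hs := g_symm (cs_ne i) (hT.2 w i hi)
    have h2 : coeff (sw i.castSucc i.succ (codeF w)) (T w) = 1 := by
      rw [← coeff_swap, hs, h1]
    rw [hd, coeff_monomial] at h2
    have h3 : d = sw i.castSucc i.succ (codeF w) := by
      by_contra h; rw [if_neg h] at h2; exact zero_ne_one h2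
    have h4 := DFunLike.congr_fun h3 i.castSucc
    rw [hdc, sw_apply, Equiv.swap_apply_left, codeF_apply, codeF_apply] at h4
    exact h4.ge
  · exact (code_desc w i (asc_or w i hi)).le

end SchubAux

/-- The Schubert polynomial `𝔖_σ` is a single monomial iff `σ` avoids 132. -/
theorem schubert_monomial_iff_avoids_132 {n : ℕ}
    (S : Equiv.Perm (Fin (n+1)) → MvPolynomial (Fin (n+1)) ℂ)
    (hS : IsSchubertFamily S) (σ : Equiv.Perm (Fin (n+1))) :
    (∃ (d : Fin (n+1) →₀ ℕ) (c : ℂ), c ≠ 0 ∧ S σ = monomial d c) ↔ ¬ contains132 σ := by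
  have hT := SchubAux.fam_of S hS
  constructor
  · rintro ⟨d, c, _, hd⟩ h
    have := SchubAux.dom_of_mono _ hT σ⁻¹ d c (by simpa using hd)
    exact SchubAux.avoid_of_dom _ this (SchubAux.contains_inv h)
  · intro h
    have h1 : ¬ contains132 σ⁻¹ := fun h2 => h (by simpa using SchubAux.contains_inv h2)
    have h2 := SchubAux.mono_of_dom _ hT σ⁻¹ (SchubAux.dom_of_avoid _ h1)
    exact ⟨_, 1, one_ne_zero, by simpa using h2⟩
end
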